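/- Let I, J ⊂ ℝ be nonempty bounded open intervals with disjoint closures, let ε > 0 and let h ∈ L²(J). Suppose ḡ ∈ L²(J) minimizes the functional 𝒢_ε(g) := ½ ∫_I ((H_J g)(x))² dx + ε · ‖g‖_{L²(J)} − ∫_J h(x) g(x) dx over all g ∈ L²(J). Define f : I → ℝ by f(x) := −(H_J ḡ)(x) for x ∈ I. Then ∫_I f(x)² dx < ∞ and ( ∫_J ((H_I f)(x) − h(x))² dx )^{1/2} ≤ ε. -/

import Mathlib

/-!
Write `T g = H_J g` restricted to `I`. Since the kernel `1 / (x - t)` is bounded on `I × J` and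
antisymmetric, Fubini gives `∫_I (T g) F = -∫_J g (H_I F)` (`integral_truncHilbert_mul`). Hence the
smooth part of `𝒢_ε` has derivative `∫_J φ u` at `ḡ` in the direction `u`, where
`φ = H_I f - h` and `f = -T ḡ`. Comparing `ḡ` with `ḡ - s φ` for small `s > 0`, and
using `‖ḡ - s φ‖ ≤ ‖ḡ‖ + s ‖φ‖` (`sqrt_integral_add_le`), minimality forces
`‖φ‖² ≤ ε ‖φ‖ + s ‖T φ‖² / 2`; letting `s → 0` yields `‖φ‖ ≤ ε`.
-/

open MeasureTheory Set

/-- Truncated Hilbert transform: `(H_K f)(x) = ∫_K f(t)/(x - t) dt`. -/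
noncomputable def truncHilbert (K : Set ℝ) (f : ℝ → ℝ) (x : ℝ) : ℝ :=
  ∫ t in K, f t / (x - t)

/-- The functional `𝒢_ε(g) = ½ ∫_I (H_J g)² + ε‖g‖_{L²(J)} − ∫_J h g`. -/
noncomputable def Gfun (I J : Set ℝ) (ε : ℝ) (h g : ℝ → ℝ) : ℝ :=
  (1 / 2) * (∫ x in I, (truncHilbert J g x) ^ 2) +
    ε * Real.sqrt (∫ t in J, (g t) ^ 2) - ∫ t in J, h t * g t

lemma integral_add_smul_sq {μ : Measure ℝ} {u v : ℝ → ℝ} (hu : MemLp u 2 μ) (hv : MemLp v 2 μ)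
    (s : ℝ) : ∫ x, (u x + s * v x) ^ 2 ∂μ =
      (∫ x, (u x) ^ 2 ∂μ) + 2 * s * (∫ x, u x * v x ∂μ) + s ^ 2 * ∫ x, (v x) ^ 2 ∂μ := by
  have i1 : Integrable (fun x => (u x) ^ 2) μ := hu.integrable_sq
  have i2 : Integrable (fun x => (v x) ^ 2) μ := hv.integrable_sq
  have i3 : Integrable (fun x => u x * v x) μ := hu.integrable_mul hv
  have e : (fun x => (u x + s * v x) ^ 2) =
      fun x => ((u x) ^ 2 + 2 * s * (u x * v x)) + s ^ 2 * (v x) ^ 2 := by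
    funext x; ring
  have i4 : Integrable (fun x => (u x) ^ 2 + 2 * s * (u x * v x)) μ := i1.add (i3.const_mul _)
  rw [e, integral_add i4 (i2.const_mul _),
    integral_add i1 (i3.const_mul _), integral_const_mul, integral_const_mul]

/-- Minkowski's inequality in `L²`; Cauchy–Schwarz enters through the discriminant of the
nonnegative quadratic `s ↦ ∫ (u + s v)²`. -/
lemma sqrt_integral_add_le {μ : Measure ℝ} {u v : ℝ → ℝ} (hu : MemLp u 2 μ) (hv : MemLp v 2 μ)
    {s : ℝ} (hs : 0 ≤ s) : √(∫ x, (u x + s * v x) ^ 2 ∂μ) ≤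
      √(∫ x, (u x) ^ 2 ∂μ) + s * √(∫ x, (v x) ^ 2 ∂μ) := by
  have hA : 0 ≤ ∫ x, (u x) ^ 2 ∂μ := integral_nonneg fun x => sq_nonneg _
  have hC : 0 ≤ ∫ x, (v x) ^ 2 ∂μ := integral_nonneg fun x => sq_nonneg _
  have hq : ∀ r : ℝ, 0 ≤ (∫ x, (v x) ^ 2 ∂μ) * (r * r) + (2 * ∫ x, u x * v x ∂μ) * r
      + ∫ x, (u x) ^ 2 ∂μ := by
    intro r
    have h0 : 0 ≤ ∫ x, (u x + r * v x) ^ 2 ∂μ := integral_nonneg fun x => sq_nonneg _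
    rw [integral_add_smul_sq hu hv] at h0
    linarith
  have hd := discrim_le_zero hq
  rw [integral_add_smul_sq hu hv]
  generalize (∫ x, (u x) ^ 2 ∂μ) = A at *
  generalize (∫ x, (v x) ^ 2 ∂μ) = C at *
  generalize (∫ x, u x * v x ∂μ) = B at *
  have hB : B ≤ √A * √C := by
    rw [← Real.sqrt_mul hA]
    apply Real.le_sqrt_of_sq_le
    unfold discrim at hd
    linarith
  apply Real.sqrt_le_iff.2
  refine ⟨by positivity, ?_⟩
  have h1 := Real.sq_sqrt hA
  have h2 := Real.sq_sqrt hC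
  have h3 := mul_le_mul_of_nonneg_left hB hs
  calc A + 2 * s * B + s ^ 2 * C = √A ^ 2 + 2 * (s * B) + s ^ 2 * √C ^ 2 := by rw [h1, h2]; ring
    _ ≤ √A ^ 2 + 2 * (s * (√A * √C)) + s ^ 2 * √C ^ 2 := by linarith
    _ = _ := by ring

lemma measurable_truncHilbert {K : Set ℝ} {g : ℝ → ℝ} (hg : Measurable g) :
    Measurable (truncHilbert K g) := by
  have : StronglyMeasurable (fun p : ℝ × ℝ => g p.2 / (p.1 - p.2)) :=
    ((hg.comp measurable_snd).div (measurable_fst.sub measurable_snd)).stronglyMeasurable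
  exact (this.integral_prod_right (ν := volume.restrict K)).measurable

lemma integrable_kernel {K : Set ℝ} (hK : MeasurableSet K) {g : ℝ → ℝ} (hg : Measurable g)
    (hgi : IntegrableOn g K) {x δ : ℝ} (hδ : 0 < δ) (hx : ∀ t ∈ K, δ ≤ |x - t|) :
    IntegrableOn (fun t => g t / (x - t)) K := by
  refine Integrable.mono' (hgi.norm.const_mul δ⁻¹)
    (hg.div (measurable_const.sub measurable_id)).aestronglyMeasurable ?_
  filter_upwards [ae_restrict_mem hK] with t ht
  rw [norm_div, div_eq_inv_mul]
  gcongr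
  exact hx t ht

lemma abs_truncHilbert_le {K : Set ℝ} (hK : MeasurableSet K) {g : ℝ → ℝ}
    (hgi : IntegrableOn g K) {x δ : ℝ} (hδ : 0 < δ) (hx : ∀ t ∈ K, δ ≤ |x - t|) :
    |truncHilbert K g x| ≤ δ⁻¹ * ∫ t in K, |g t| := by
  rw [← integral_const_mul, truncHilbert, ← Real.norm_eq_abs]
  refine norm_integral_le_of_norm_le (hgi.norm.const_mul δ⁻¹) ?_
  filter_upwards [ae_restrict_mem hK] with t ht
  rw [norm_div, div_eq_inv_mul]
  rw [Real.norm_eq_abs (g t)]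
  gcongr
  exact hx t ht

lemma memLp_truncHilbert {L K : Set ℝ} (hL : MeasurableSet L) (hK : MeasurableSet K)
    [IsFiniteMeasure (volume.restrict L)] {g : ℝ → ℝ} (hg : Measurable g)
    (hgi : IntegrableOn g K) {δ : ℝ} (hδ : 0 < δ) (hx : ∀ x ∈ L, ∀ t ∈ K, δ ≤ |x - t|) :
    MemLp (truncHilbert K g) 2 (volume.restrict L) := by
  refine MemLp.of_bound (measurable_truncHilbert hg).aestronglyMeasurable
    (δ⁻¹ * ∫ t in K, |g t|) ?_
  filter_upwards [ae_restrict_mem hL] with x hxL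
  exact abs_truncHilbert_le hK hgi hδ (hx x hxL)

/-- The adjoint of `H_J : L²(J) → L²(I)` is `-H_I`. -/
lemma integral_truncHilbert_mul {I J : Set ℝ} (hI : MeasurableSet I) (hJ : MeasurableSet J)
    {F g : ℝ → ℝ} (hF : Measurable F) (hg : Measurable g)
    (hFi : IntegrableOn F I) (hgi : IntegrableOn g J) {δ : ℝ} (hδ : 0 < δ)
    (hx : ∀ x ∈ I, ∀ t ∈ J, δ ≤ |x - t|) [IsFiniteMeasure (volume.restrict I)]
    [IsFiniteMeasure (volume.restrict J)] :
    ∫ x in I, F x * truncHilbert J g x = ∫ t in J, -(truncHilbert I F t) * g t := by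
  have hint : Integrable (fun p : ℝ × ℝ => F p.1 * (g p.2 / (p.1 - p.2)))
      ((volume.restrict I).prod (volume.restrict J)) := by
    have h0 : Integrable (fun p : ℝ × ℝ => F p.1 * g p.2)
      ((volume.restrict I).prod (volume.restrict J)) := Integrable.mul_prod hFi hgi
    refine Integrable.mono' (h0.norm.const_mul δ⁻¹)
      ((hF.comp measurable_fst).mul ((hg.comp measurable_snd).div
        (measurable_fst.sub measurable_snd))).aestronglyMeasurable ?_
    rw [Measure.prod_restrict]
    filter_upwards [ae_restrict_mem (hI.prod hJ)] with p hp
    rw [← mul_div_assoc, norm_div, div_eq_inv_mul]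
    gcongr
    exact hx _ hp.1 _ hp.2
  calc ∫ x in I, F x * truncHilbert J g x
      = ∫ x in I, ∫ t in J, F x * (g t / (x - t)) := by
        simp only [truncHilbert, integral_const_mul]
    _ = ∫ t in J, ∫ x in I, F x * (g t / (x - t)) := integral_integral_swap hint
    _ = ∫ t in J, -(truncHilbert I F t) * g t := by
        congr 1; funext t
        rw [truncHilbert, ← integral_neg, ← integral_mul_const]
        congr 1; funext x
        rw [← neg_sub t x, div_neg]
        ring

lemma exists_gap {a b c d : ℝ} (hab : a < b) (hcd : c < d)
    (hdisj : Disjoint (closure (Ioo a b)) (closure (Ioo c d))) :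
    ∃ δ > 0, ∀ x ∈ Ioo a b, ∀ t ∈ Ioo c d, δ ≤ |x - t| := by
  rw [closure_Ioo hab.ne, closure_Ioo hcd.ne, Set.disjoint_left] at hdisj
  have : b < c ∨ d < a := by
    by_contra! hc
    exact hdisj (a := max a c) ⟨le_max_left _ _, max_le hab.le hc.1⟩
      ⟨le_max_right _ _, max_le hc.2 hcd.le⟩
  rcases this with h | h
  · refine ⟨c - b, by linarith, fun x hx t ht => le_trans ?_ (neg_le_abs _)⟩
    linarith [hx.2, ht.1]
  · refine ⟨a - d, by linarith, fun x hx t ht => le_trans ?_ (le_abs_self _)⟩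
    linarith [hx.1, ht.2]

theorem stmt_9 (a b c d : ℝ) (hab : a < b) (hcd : c < d)
    (hdisj : Disjoint (closure (Ioo a b)) (closure (Ioo c d)))
    (ε : ℝ) (hε : 0 < ε)
    (h : ℝ → ℝ) (hh : Measurable h)
    (hh2 : IntegrableOn (fun x => (h x) ^ 2) (Ioo c d) volume)
    (gbar : ℝ → ℝ) (hgbar : Measurable gbar)
    (hgbar2 : IntegrableOn (fun t => (gbar t) ^ 2) (Ioo c d) volume)
    (hmin : ∀ g : ℝ → ℝ, Measurable g → IntegrableOn (fun t => (g t) ^ 2) (Ioo c d) volume →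
      Gfun (Ioo a b) (Ioo c d) ε h gbar ≤ Gfun (Ioo a b) (Ioo c d) ε h g) :
    IntegrableOn (fun x => (-(truncHilbert (Ioo c d) gbar x)) ^ 2) (Ioo a b) volume ∧
    Real.sqrt (∫ x in Ioo c d,
        (truncHilbert (Ioo a b) (fun y => -(truncHilbert (Ioo c d) gbar y)) x - h x) ^ 2)
      ≤ ε := by
  obtain ⟨δ, hδ, hgap⟩ := exists_gap hab hcd hdisj
  have hgap' : ∀ t ∈ Ioo c d, ∀ x ∈ Ioo a b, δ ≤ |t - x| := fun t ht x hx => by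
    rw [abs_sub_comm]; exact hgap x hx t ht
  have mI : MeasurableSet (Ioo a b) := measurableSet_Ioo
  have mJ : MeasurableSet (Ioo c d) := measurableSet_Ioo
  have hL : MemLp h 2 (volume.restrict (Ioo c d)) :=
    (memLp_two_iff_integrable_sq hh.aestronglyMeasurable).2 hh2
  have gL : MemLp gbar 2 (volume.restrict (Ioo c d)) :=
    (memLp_two_iff_integrable_sq hgbar.aestronglyMeasurable).2 hgbar2
  have gi : IntegrableOn gbar (Ioo c d) := gL.integrable one_le_two
  have TgL := memLp_truncHilbert mI mJ hgbar gi hδ hgap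
  have Tgm : Measurable (truncHilbert (Ioo c d) gbar) := measurable_truncHilbert hgbar
  have Tgi : IntegrableOn (truncHilbert (Ioo c d) gbar) (Ioo a b) := TgL.integrable one_le_two
  refine ⟨TgL.neg.integrable_sq, ?_⟩
  have fm : Measurable (fun y => -(truncHilbert (Ioo c d) gbar y)) := Tgm.neg
  have fi : IntegrableOn (fun y => -(truncHilbert (Ioo c d) gbar y)) (Ioo a b) := Tgi.neg
  have HL := memLp_truncHilbert mJ mI fm fi hδ hgap'
  have Hm := measurable_truncHilbert (K := Ioo a b) fm
  have Hneg : ∀ x, truncHilbert (Ioo a b) (fun y => -(truncHilbert (Ioo c d) gbar y)) x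
      = -truncHilbert (Ioo a b) (truncHilbert (Ioo c d) gbar) x := by
    intro x
    simp only [truncHilbert, neg_div, integral_neg]
  set u : ℝ → ℝ := fun x =>
    h x - truncHilbert (Ioo a b) (fun y => -(truncHilbert (Ioo c d) gbar y)) x with hu
  have um : Measurable u := hh.sub Hm
  have uL : MemLp u 2 (volume.restrict (Ioo c d)) := hL.sub HL
  have ui : IntegrableOn u (Ioo c d) := uL.integrable one_le_two
  have TuL := memLp_truncHilbert mI mJ um ui hδ hgap
  have hadj := integral_truncHilbert_mul mI mJ Tgm um Tgi ui hδ hgap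
  have hgoal : ∫ x in Ioo c d,
      (truncHilbert (Ioo a b) (fun y => -(truncHilbert (Ioo c d) gbar y)) x - h x) ^ 2
      = ∫ x in Ioo c d, (u x) ^ 2 := by
    congr 1; funext x; simp only [hu]; ring
  rw [hgoal]
  -- The directional derivative of the smooth part of the functional along `u` is `-‖u‖²`.
  have hderiv : (∫ x in Ioo a b, truncHilbert (Ioo c d) gbar x * truncHilbert (Ioo c d) u x)
      - (∫ t in Ioo c d, h t * u t) = -∫ x in Ioo c d, (u x) ^ 2 := by
    have i1 : Integrable (fun t => -(truncHilbert (Ioo a b) (truncHilbert (Ioo c d) gbar) t) * u t)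
        (volume.restrict (Ioo c d)) := by
      have := HL.integrable_mul uL
      refine this.congr (Filter.Eventually.of_forall fun x => ?_)
      simp only [Pi.mul_apply, Hneg]
    have i2 : Integrable (fun t => h t * u t) (volume.restrict (Ioo c d)) := hL.integrable_mul uL
    rw [hadj, ← integral_sub i1 i2, ← integral_neg]
    congr 1; funext t
    simp only [hu, Hneg]; ring
  set S := ∫ x in Ioo c d, (u x) ^ 2 with hS
  have hS0 : 0 ≤ S := integral_nonneg fun x => sq_nonneg _
  set C := ∫ x in Ioo a b, (truncHilbert (Ioo c d) u x) ^ 2 with hC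
  have key : ∀ s : ℝ, 0 < s → S ≤ ε * √S + s * (C / 2) := by
    intro s hs
    have hm := hmin (fun t => gbar t + s * u t) (hgbar.add (um.const_mul s))
      (gL.add (uL.const_mul s)).integrable_sq
    have hT : ∫ x in Ioo a b, (truncHilbert (Ioo c d) (fun t => gbar t + s * u t) x) ^ 2
        = ∫ x in Ioo a b, (truncHilbert (Ioo c d) gbar x + s * truncHilbert (Ioo c d) u x) ^ 2 := by
      refine setIntegral_congr_fun mI fun x hx => ?_
      have j1 := integrable_kernel mJ hgbar gi hδ (hgap x hx)
      have j2 := integrable_kernel mJ um ui hδ (hgap x hx)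
      simp only [truncHilbert]
      rw [← integral_const_mul, ← integral_add j1 (j2.const_mul s)]
      congr 2; funext t; ring
    have hlin : ∫ t in Ioo c d, h t * (gbar t + s * u t)
        = (∫ t in Ioo c d, h t * gbar t) + s * ∫ t in Ioo c d, h t * u t := by
      have j1 : Integrable (fun t => h t * gbar t) (volume.restrict (Ioo c d)) :=
        hL.integrable_mul gL
      have j2 : Integrable (fun t => h t * u t) (volume.restrict (Ioo c d)) :=
        hL.integrable_mul uL
      rw [← integral_const_mul, ← integral_add j1 (j2.const_mul s)]
      congr 1; funext t; ring
    have hmink := mul_le_mul_of_nonneg_left (sqrt_integral_add_le gL uL hs.le) hε.le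
    simp only [Gfun] at hm
    rw [hT, hlin, integral_add_smul_sq TgL TuL] at hm
    have : s * S ≤ s * (ε * √S + s * (C / 2)) := by
      have := congrArg (s * ·) hderiv
      simp only [mul_sub, mul_neg] at this
      linarith
    exact le_of_mul_le_mul_left this hs
  have hlim : S ≤ ε * √S := by
    have hC0 : 0 ≤ C := integral_nonneg fun x => sq_nonneg _
    refine le_of_forall_pos_le_add fun η hη => (key (η / (C + 1)) (by positivity)).trans ?_
    gcongr
    rw [div_mul_eq_mul_div, div_le_iff₀ (by positivity)]
    nlinarith
  rcases (Real.sqrt_nonneg S).eq_or_lt with h0 | h0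
  · rw [← h0]; exact hε.le
  · refine le_of_mul_le_mul_right ?_ h0
    rwa [Real.mul_self_sqrt hS0]
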